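/- arXiv:2603.01785 — 2 statements merged into one kernel-verified Lean document; each statement's English description precedes it below -/
import Mathlib

section
/- Let S, F be real n×n matrices with Sᵀ = S and Fᵀ = −F, set V := S + F, and regard S, F, V as complex matrices acting on ℂⁿ. Let ρ̃ : ℝ → ℂⁿ be differentiable, set y(t) := (1−i)·ρ̃(t) (so the state lies on the holomorphic leaf {φ = 0} of the polarisation M* = (1−i)I), and suppose ρ̃ satisfies the projected Hamilton equation 2i·ρ̃'(t) = (1+i)(y(t) + V ρ̃(t)) + Vᵀ y(t). Then ψ(t) := 2ρ̃(t) satisfies the Schrödinger equation i·ψ'(t) = (I + S + iF) ψ(t); equivalently, after the scalar rephasing Ψ(t) := e^{it} ψ(t), one has i·Ψ'(t) = (S + iF) Ψ(t). -/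
/-!
With `Vᵀ = S - F`, the right-hand side of the projected Hamilton equation collapses because
`(1+i)(1-i) = 2` and `(1+i)(S+F) + (1-i)(S-F) = 2(S + iF)`, giving `2i ρ' = 2(1 + S + iF) ρ`,
which is the equation for `ψ = 2ρ`. The product rule for `exp(it) ψ` contributes an extra
`i exp(it) ψ`, which cancels the identity term.
-/

open Matrix

/-- Schrödinger dynamics from the distinguished polarisation `M* = (1−i)I`.
With `V = S + F` (`S` symmetric, `F` skew), on the holomorphic leaf `y = (1−i)ρ̃` the
projected Hamilton equation `2i ρ̃' = (1+i)(y + Vρ̃) + Vᵀ y` implies that `ψ := 2ρ̃`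
satisfies `i ψ' = (I + S + iF) ψ`, and the rephased state `Ψ := e^{it} ψ` satisfies the
Schrödinger equation `i Ψ' = (S + iF) Ψ`. -/
theorem schrodinger_from_distinguished_polarisation
    (n : ℕ) (S F : Matrix (Fin n) (Fin n) ℝ)
    (hS : S.transpose = S) (hF : F.transpose = -F)
    (ρ ρ' : ℝ → (Fin n → ℂ))
    (hρ : ∀ t, HasDerivAt ρ (ρ' t) t)
    (heq : ∀ t,
      ((2 : ℂ) * Complex.I) • ρ' t =
        ((1 : ℂ) + Complex.I) • (((1 : ℂ) - Complex.I) • ρ t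
            + ((S + F).map (Complex.ofReal)).mulVec (ρ t))
          + (((S + F).transpose).map (Complex.ofReal)).mulVec (((1 : ℂ) - Complex.I) • ρ t)) :
    (∀ t, Complex.I • ((2 : ℂ) • ρ' t) =
      ((1 : Matrix (Fin n) (Fin n) ℂ) + S.map (Complex.ofReal)
          + Complex.I • F.map (Complex.ofReal)).mulVec ((2 : ℂ) • ρ t)) ∧
    (∀ t : ℝ, HasDerivAt
      (fun s : ℝ => Complex.exp (Complex.I * (s : ℂ)) • ((2 : ℂ) • ρ s))
      ((-Complex.I) • ((S.map (Complex.ofReal) + Complex.I • F.map (Complex.ofReal)).mulVec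
          (Complex.exp (Complex.I * (t : ℂ)) • ((2 : ℂ) • ρ t)))) t) := by
  have h1 : ∀ t, Complex.I • ((2 : ℂ) • ρ' t) =
      ((1 : Matrix (Fin n) (Fin n) ℂ) + S.map (Complex.ofReal)
          + Complex.I • F.map (Complex.ofReal)).mulVec ((2 : ℂ) • ρ t) := by
    intro t
    have h := heq t
    have hV : (S + F).map Complex.ofReal = S.map Complex.ofReal + F.map Complex.ofReal := by
      ext i j; simp
    have hVT : (S + F).transpose.map Complex.ofReal
        = S.map Complex.ofReal - F.map Complex.ofReal := by
      rw [transpose_add, hS, hF]; ext i j; simp [sub_eq_add_neg]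
    rw [hV, hVT] at h
    rw [smul_smul, mul_comm, h]
    simp only [add_mulVec, sub_mulVec, smul_mulVec, mulVec_smul, one_mulVec]
    ext j
    simp only [Pi.add_apply, Pi.sub_apply, Pi.smul_apply, smul_eq_mul]
    linear_combination (-(ρ t j)) * Complex.I_sq
  refine ⟨h1, fun t => ?_⟩
  have hexp : HasDerivAt (fun s : ℝ => Complex.exp (Complex.I * (s : ℂ)))
      (Complex.exp (Complex.I * (t : ℂ)) * Complex.I) t := by
    simpa using ((Complex.ofRealCLM.hasDerivAt (x := t)).const_mul Complex.I).cexp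
  have hΨ := hexp.smul ((hρ t).const_smul (2 : ℂ))
  refine hΨ.congr_deriv ?_
  have hρ' : (2 : ℂ) • ρ' t = (-Complex.I) • (Complex.I • ((2 : ℂ) • ρ' t)) := by
    rw [smul_smul]; simp
  rw [hρ', h1 t]
  simp only [add_mulVec, smul_mulVec, mulVec_smul, one_mulVec]
  ext j
  simp only [Pi.add_apply, Pi.smul_apply, smul_eq_mul]
  ring
end

section
/- Let S, F be real n×n matrices with Sᵀ = S and Fᵀ = −F, set V := S + F, and let ρ̃, y : ℝ → ℝⁿ be differentiable curves satisfying ρ̃'(t) = V ρ̃(t) + y(t) and y'(t) = −Vᵀ y(t) for all t. Define z : ℝ → ℂⁿ by z(t) := ρ̃(t) + i·y(t). Then z satisfies the (generally non-complex-linear) Bogoliubov-type equation z'(t) = (F − (i/2)I) z(t) + (S + (i/2)I) · conj(z(t)), where S and F act on ℂⁿ entrywise and conj denotes componentwise complex conjugation. -/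
/-!
Differentiating `z = ρ̃ + iy` componentwise gives `z' = (S + F)ρ̃ + y - i(S - F)y`, since
`Vᵀ = S - F`. Grouping by matrix, this is `F(ρ̃ + iy) + S(ρ̃ - iy) + y = Fz + Sz̄ + y`, and
`y = (i/2)(z̄ - z)`.
-/

open Matrix

/-- Non-Hermitian complex packaging.  Along solutions of the lifted
least-action system `ρ̃' = Vρ̃ + y`, `y' = −Vᵀy` with `V = S + F` (`S` symmetric, `F` skew),
the complex variable `z = ρ̃ + iy` satisfies the Bogoliubov-type equation
`z' = (F − (i/2)I) z + (S + (i/2)I) z̄`. -/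
theorem bogoliubov_packaging
    (n : ℕ) (S F : Matrix (Fin n) (Fin n) ℝ)
    (hS : S.transpose = S) (hF : F.transpose = -F)
    (ρ y : ℝ → (Fin n → ℝ))
    (hρ : ∀ t, HasDerivAt ρ ((S + F).mulVec (ρ t) + y t) t)
    (hy : ∀ t, HasDerivAt y (-((S + F).transpose.mulVec (y t))) t) :
    ∀ t : ℝ, HasDerivAt
      (fun s : ℝ => (fun i => (ρ s i : ℂ) + Complex.I * (y s i : ℂ)))
      ((F.map (Complex.ofReal) - (Complex.I / 2) • (1 : Matrix (Fin n) (Fin n) ℂ)).mulVec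
          (fun i => (ρ t i : ℂ) + Complex.I * (y t i : ℂ))
        + (S.map (Complex.ofReal) + (Complex.I / 2) • (1 : Matrix (Fin n) (Fin n) ℂ)).mulVec
          (fun i => starRingEnd ℂ ((ρ t i : ℂ) + Complex.I * (y t i : ℂ)))) t := by
  intro t
  rw [hasDerivAt_pi]
  intro i
  have h := ((hasDerivAt_pi.1 (hρ t) i).ofReal_comp).add
    (((hasDerivAt_pi.1 (hy t) i).ofReal_comp).const_mul Complex.I)
  refine h.congr_deriv ?_
  rw [Matrix.transpose_add, hS, hF]
  simp only [Matrix.add_mulVec, Matrix.sub_mulVec, Matrix.neg_mulVec, Matrix.smul_mulVec,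
    Matrix.one_mulVec, Pi.add_apply, Pi.sub_apply, Pi.neg_apply, Pi.smul_apply, smul_eq_mul,
    map_add, map_mul, Complex.conj_I, Complex.conj_ofReal, Matrix.mulVec, dotProduct,
    Matrix.map_apply, mul_add, Finset.sum_add_distrib]
  push_cast
  simp only [mul_left_comm _ Complex.I, neg_mul, mul_neg, Finset.sum_neg_distrib,
    ← Finset.mul_sum]
  -- The `(i/2)`-terms combine to `(i/2)(z̄ - z) = y`, through `i² = -1`.
  linear_combination (y t i : ℂ) * Complex.I_sq
end
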